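/- Assume C is an n×n nonnegative irreducible matrix and g is an admissible weight function. Then for every x ∈ Σ, the unique invariant measure u_g(x) of M_g(x) is given by u_g(x) = h(x)/⟨h(x), 1⟩, where for every index r, h(x)_r = (Σ_k C_{rk} g(x_k)) · (Σ_{R ∈ A_r(M)} Π_{(i,j)∈R} C_{ij} g(x_j)), the sum being over all spanning arborescences R of the directed graph of M_g(x) rooted at r, and ⟨h(x),1⟩ = Σ_i h(x)_i. -/

import Mathlib

/-!
For arbitrary weights `w` on the edges of the complete digraph, let `T r` be the sum of the weights
of the spanning trees oriented towards `r`. Adding an edge out of the root turns a tree into a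
self-map of the vertex set with a single cycle. Each self-map `f` whose only cycle contains `j`
arises exactly once by adding an edge out of `j` to a tree rooted at `j`, and exactly once by adding
an edge `(i, j)` to a tree rooted at some `i`, namely the predecessor of `j` on the cycle. Hence
`(∑ k, w j k) * T j = ∑ i, T i * w i j`, so `r ↦ (∑ k, w r k) * T r` is invariant under the
row-normalized weights. For an irreducible chain this vector is positive, and subtracting from
another invariant vector the largest multiple of it that keeps the difference nonnegative leaves a
nonnegative invariant vector with a zero entry, hence zero.
-/

open Set Matrix

open scoped Classical

/-- An admissible weight function. -/
def IsAdmissible (g g' : ℝ → ℝ) : Prop :=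
  (∀ x ∈ Set.Icc (0:ℝ) 1, HasDerivWithinAt g (g' x) (Set.Icc (0:ℝ) 1) x) ∧
  ContinuousOn g' (Set.Icc (0:ℝ) 1) ∧
  g 0 = 1 ∧
  (∀ x ∈ Set.Icc (0:ℝ) 1, 0 < g x) ∧
  (∀ x ∈ Set.Icc (0:ℝ) 1, 0 < g' x)

/-- `C` is irreducible: its directed graph (edge `(i,j)` iff `C i j > 0`) is strongly
connected; for a nonnegative matrix this means some power has a positive `(i,j)` entry. -/
def IsIrred {n : ℕ} (C : Matrix (Fin n) (Fin n) ℝ) : Prop :=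
  ∀ i j : Fin n, ∃ m : ℕ, 0 < m ∧ 0 < (C ^ m) i j

/-- The stochastic matrix `M_g(x)`. -/
noncomputable def Mg {n : ℕ} (C : Matrix (Fin n) (Fin n) ℝ) (g : ℝ → ℝ)
    (x : Fin n → ℝ) : Matrix (Fin n) (Fin n) ℝ :=
  Matrix.of fun i j => C i j * g (x j) / ∑ k, C i k * g (x k)

/-- A spanning arborescence of the directed graph of the nonnegative matrix `A`, rooted
at `r`, encoded by the successor map `t` (with the convention `t r = r`): every node
`i ≠ r` has exactly one outgoing edge `(i, t i)`, which is an edge of `G(A)`, and there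
are no directed cycles, i.e. from every node iterating `t` leads to the root `r`. -/
def IsArb {n : ℕ} (A : Matrix (Fin n) (Fin n) ℝ) (r : Fin n) (t : Fin n → Fin n) : Prop :=
  t r = r ∧ (∀ i, i ≠ r → 0 < A i (t i)) ∧ ∀ i, ∃ m : ℕ, t^[m] i = r

/-- The vector `h(x)` of the Matrix Tree Theorem expression:
`h(x)_r = (Σ_k C_{rk} g(x_k)) · Σ_{R ∈ A_r(M_g(x))} Π_{(i,j)∈R} C_{ij} g(x_j)`. -/
noncomputable def hvec {n : ℕ} (C : Matrix (Fin n) (Fin n) ℝ) (g : ℝ → ℝ)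
    (x : Fin n → ℝ) (r : Fin n) : ℝ :=
  (∑ k, C r k * g (x k)) *
    ∑ t ∈ Finset.univ.filter (fun t : Fin n → Fin n => IsArb (Mg C g x) r t),
      ∏ i ∈ Finset.univ.filter (fun i : Fin n => i ≠ r), C i (t i) * g (x (t i))

/-- Every orbit of `f` passes through `r`. In the functional graph of `f`, this says that there is
a single cycle and that it contains `r`. -/
def EveryOrbitHits {α : Type*} (f : α → α) (r : α) : Prop :=
  ∀ i, ∃ m : ℕ, f^[m] i = r

namespace EveryOrbitHits

variable {α : Type*} {f f' : α → α} {r s : α}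

lemma congr_of_ne (h : EveryOrbitHits f r) (hff' : ∀ i ≠ r, f i = f' i) : EveryOrbitHits f' r := by
  intro i
  obtain ⟨m, hm⟩ := h i
  induction m generalizing i with
  | zero => exact ⟨0, hm⟩
  | succ m ih =>
    obtain rfl | hi := eq_or_ne i r
    · exact ⟨0, rfl⟩
    · obtain ⟨m', hm'⟩ := ih (f i) hm
      exact ⟨m' + 1, by rwa [Function.iterate_succ_apply, ← hff' i hi]⟩

lemma update [DecidableEq α] (h : EveryOrbitHits f r) (k : α) :
    EveryOrbitHits (Function.update f r k) r :=
  h.congr_of_ne fun _ hi => (Function.update_of_ne hi _ _).symm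

lemma of_iterate_eq (h : EveryOrbitHits f r) {k : ℕ} (hk : f^[k] r = s) : EveryOrbitHits f s := by
  intro i
  obtain ⟨m, hm⟩ := h i
  exact ⟨k + m, by rw [Function.iterate_add_apply, hm, hk]⟩

lemma of_apply_eq (h : EveryOrbitHits f r) (hs : f r = s) : EveryOrbitHits f s :=
  h.of_iterate_eq (k := 1) hs

lemma mem_periodicPts (h : EveryOrbitHits f r) : r ∈ Function.periodicPts f := by
  obtain ⟨m, hm⟩ := h (f r)
  exact ⟨m + 1, m.succ_pos, hm⟩

lemma existsUnique_apply_eq (h : EveryOrbitHits f r) : ∃! i, EveryOrbitHits f i ∧ f i = r := by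
  obtain ⟨m, hm⟩ := h (f r)
  have hpred : f (f^[m] r) = r := by
    rw [← Function.iterate_succ_apply' f, Function.iterate_succ_apply, hm]
  refine ⟨f^[m] r, ⟨h.of_iterate_eq rfl, hpred⟩, fun i ⟨hi, hir⟩ => ?_⟩
  exact (Function.bijOn_periodicPts f).injOn hi.mem_periodicPts
    (h.of_iterate_eq rfl).mem_periodicPts (hir.trans hpred.symm)

lemma of_rank_lt {d : α → ℕ} (h : ∀ i ≠ r, d (f i) < d i) : EveryOrbitHits f r := by
  intro i
  induction hd : d i using Nat.strong_induction_on generalizing i with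
  | _ k ih =>
    obtain rfl | hi := eq_or_ne i r
    · exact ⟨0, rfl⟩
    · obtain ⟨m, hm⟩ := ih (d (f i)) (hd ▸ h i hi) (f i) rfl
      exact ⟨m + 1, hm⟩

end EveryOrbitHits

section TreeSums

variable {ι R : Type*} [Fintype ι] [DecidableEq ι] [CommSemiring R]

/-- The total weight of the spanning trees of the complete digraph on `ι` oriented towards `r`,
where a tree is encoded by its parent map `t` with `t r = r`. Trees using an edge of weight zero
do not contribute. -/
noncomputable def rootedTreeSum (w : Matrix ι ι R) (r : ι) : R :=
  ∑ t : ι → ι with t r = r ∧ EveryOrbitHits t r, ∏ i with i ≠ r, w i (t i)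

/-- The unnormalized stationary measure attached to the weights `w` by the Markov chain tree
theorem. -/
noncomputable def treeMeasure (w : Matrix ι ι R) (r : ι) : R :=
  (∑ k, w r k) * rootedTreeSum w r

lemma prod_update_eq_prod_ne_mul (w : Matrix ι ι R) (t : ι → ι) (r k : ι) :
    ∏ i, w i (Function.update t r k i) = (∏ i with i ≠ r, w i (t i)) * w r k := by
  rw [Finset.filter_ne', ← Finset.prod_erase_mul _ _ (Finset.mem_univ r), Function.update_self]
  congr 1
  refine Finset.prod_congr rfl fun i hi => ?_
  rw [Function.update_of_ne (Finset.ne_of_mem_erase hi)]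

lemma rootedTreeSum_mul_apply (w : Matrix ι ι R) (r k : ι) :
    rootedTreeSum w r * w r k =
      ∑ f : ι → ι with EveryOrbitHits f r ∧ f r = k, ∏ i, w i (f i) := by
  rw [rootedTreeSum, Finset.sum_mul]
  refine Finset.sum_nbij' (fun t => Function.update t r k) (fun f => Function.update f r r)
    ?_ ?_ ?_ ?_ fun t _ => (prod_update_eq_prod_ne_mul w t r k).symm
  · intro t ht
    simp_all [EveryOrbitHits.update]
  · intro f hf
    simp_all [EveryOrbitHits.update]
  · intro t ht
    have hroot : t r = r := (Finset.mem_filter.1 ht).2.1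
    rw [Function.update_idem, Function.update_eq_self_iff, hroot]
  · intro f hf
    have hedge : f r = k := (Finset.mem_filter.1 hf).2.2
    rw [Function.update_idem, Function.update_eq_self_iff, hedge]

lemma treeMeasure_eq_sum_everyOrbitHits (w : Matrix ι ι R) (r : ι) :
    treeMeasure w r = ∑ f : ι → ι with EveryOrbitHits f r, ∏ i, w i (f i) := by
  rw [treeMeasure, mul_comm, Finset.mul_sum]
  simp_rw [rootedTreeSum_mul_apply, ← Finset.filter_filter]
  exact Finset.sum_fiberwise _ _ _

lemma rootedTreeSum_vecMul (w : Matrix ι ι R) : rootedTreeSum w ᵥ* w = treeMeasure w := by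
  ext j
  calc ∑ i, rootedTreeSum w i * w i j
      = ∑ i, ∑ f : ι → ι with EveryOrbitHits f i ∧ f i = j, ∏ l, w l (f l) := by
        simp_rw [rootedTreeSum_mul_apply]
    _ = ∑ f : ι → ι with EveryOrbitHits f j, ∑ i with EveryOrbitHits f i ∧ f i = j,
          ∏ l, w l (f l) := by
        refine Finset.sum_comm' fun i f => ?_
        simpa using fun hi hij => hi.of_apply_eq hij
    _ = ∑ f : ι → ι with EveryOrbitHits f j, ∏ l, w l (f l) := by
        refine Finset.sum_congr rfl fun f hf => ?_
        have hcard := (Fintype.existsUnique_iff_card_one _).1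
          (Finset.mem_filter.1 hf).2.existsUnique_apply_eq
        rw [Finset.sum_const, hcard, one_smul]
    _ = treeMeasure w j := (treeMeasure_eq_sum_everyOrbitHits w j).symm

end TreeSums

section Irreducible

variable {ι R : Type*}

lemma isIrreducible_of_apply_pos_iff [Ring R] [LinearOrder R] {A B : Matrix ι ι R}
    (hA : A.IsIrreducible) (hB : ∀ i j, 0 ≤ B i j) (hAB : ∀ i j, 0 < A i j ↔ 0 < B i j) :
    B.IsIrreducible := by
  have hquiver : A.toQuiver = B.toQuiver := by simp only [toQuiver, hAB]
  exact ⟨hB, hquiver ▸ hA.connected⟩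

section Ring

variable [Ring R] [LinearOrder R] [IsStrictOrderedRing R] {A : Matrix ι ι R}

lemma exists_apply_pos_of_pow_succ_apply_pos [Fintype ι] [DecidableEq ι]
    (hA : ∀ i j, 0 ≤ A i j) {m : ℕ} {i j : ι} (h : 0 < (A ^ (m + 1)) i j) :
    ∃ k, 0 < A i k ∧ 0 < (A ^ m) k j := by
  rw [pow_succ', mul_apply] at h
  obtain ⟨k, -, hk⟩ := Finset.exists_lt_of_sum_lt (f := fun _ => (0 : R)) (by simpa using h)
  exact ⟨k, pos_of_mul_pos_left hk (pow_apply_nonneg hA m k j),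
    pos_of_mul_pos_right hk (hA i k)⟩

lemma exists_everyOrbitHits_of_isIrreducible [Finite ι] (hA : A.IsIrreducible) (r : ι) :
    ∃ t : ι → ι, t r = r ∧ EveryOrbitHits t r ∧ ∀ i ≠ r, 0 < A i (t i) := by
  cases nonempty_fintype ι
  have hreach : ∀ i, ∃ m, 0 < (A ^ m) i r := fun i =>
    ((isIrreducible_iff_exists_pow_pos hA.nonneg).1 hA i r).imp fun _ => And.right
  let depth : ι → ℕ := fun i => Nat.find (hreach i)
  have hcloser : ∀ i ≠ r, ∃ k, 0 < A i k ∧ depth k < depth i := by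
    intro i hi
    have hpow : 0 < (A ^ depth i) i r := Nat.find_spec (hreach i)
    cases hd : depth i with
    | zero => simp [hd, hi] at hpow
    | succ d =>
      rw [hd] at hpow
      obtain ⟨k, hik, hkr⟩ := exists_apply_pos_of_pow_succ_apply_pos hA.nonneg hpow
      exact ⟨k, hik, Nat.lt_succ_of_le (Nat.find_min' (hreach k) hkr)⟩
  choose! t ht using hcloser
  have htree : EveryOrbitHits t r := .of_rank_lt fun i hi => (ht i hi).2
  refine ⟨Function.update t r r, Function.update_self .., htree.update r, fun i hi => ?_⟩
  rw [Function.update_of_ne hi]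
  exact (ht i hi).1

variable [Fintype ι]

lemma sum_row_pos_of_isIrreducible (hA : A.IsIrreducible) (i : ι) : 0 < ∑ k, A i k := by
  obtain ⟨m, hm, hpos⟩ := (isIrreducible_iff_exists_pow_pos hA.nonneg).1 hA i i
  obtain ⟨m, rfl⟩ := Nat.exists_eq_add_one.2 hm
  obtain ⟨k, hk, -⟩ := exists_apply_pos_of_pow_succ_apply_pos hA.nonneg hpos
  exact Finset.sum_pos' (fun j _ => hA.nonneg i j) ⟨k, Finset.mem_univ k, hk⟩

lemma eq_zero_of_vecMul_eq_of_nonneg (hA : A.IsIrreducible) {v : ι → R} (hv : 0 ≤ v)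
    (hvA : v ᵥ* A = v) {j : ι} (hj : v j = 0) : v = 0 := by
  have hpow : ∀ m : ℕ, v ᵥ* A ^ m = v := by
    intro m
    induction m with
    | zero => simp
    | succ m ih => rw [pow_succ, ← vecMul_vecMul, ih, hvA]
  ext i
  obtain ⟨m, -, hm⟩ := (isIrreducible_iff_exists_pow_pos hA.nonneg).1 hA i j
  have hsum : ∑ k, v k * (A ^ m) k j = 0 := (congrFun (hpow m) j).trans hj
  have hterm := (Finset.sum_eq_zero_iff_of_nonneg fun k _ =>
    mul_nonneg (hv k) (pow_apply_nonneg hA.nonneg m k j)).1 hsum i (Finset.mem_univ i)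
  exact (mul_eq_zero.1 hterm).resolve_right hm.ne'

end Ring

section Field

variable [Fintype ι] [Field R] [LinearOrder R] [IsStrictOrderedRing R] {A : Matrix ι ι R}

lemma exists_eq_smul_of_vecMul_eq (hA : A.IsIrreducible) {u v : ι → R} (hu : ∀ i, 0 < u i)
    (huA : u ᵥ* A = u) (hvA : v ᵥ* A = v) : ∃ c : R, v = c • u := by
  obtain hι | hι := isEmpty_or_nonempty ι
  · exact ⟨0, Subsingleton.elim _ _⟩
  obtain ⟨j, hj⟩ := Finite.exists_min fun i => v i / u i
  let c := v j / u j
  have hnonneg : 0 ≤ v - c • u := fun i => sub_nonneg.2 ((le_div_iff₀ (hu i)).1 (hj i))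
  have hfixed : (v - c • u) ᵥ* A = v - c • u := by rw [sub_vecMul, smul_vecMul, hvA, huA]
  have hvanish : (v - c • u) j = 0 := sub_eq_zero.2 (div_mul_cancel₀ _ (hu j).ne').symm
  exact ⟨c, sub_eq_zero.1 (eq_zero_of_vecMul_eq_of_nonneg hA hnonneg hfixed hvanish)⟩

end Field

end Irreducible

section MarkovChainTree

variable {ι R : Type*} [Fintype ι]

/-- The transition matrix of the Markov chain that jumps from `i` to `j` with probability
proportional to `w i j`. A row whose sum vanishes becomes zero. -/
def rowNormalize [DivisionRing R] (w : Matrix ι ι R) : Matrix ι ι R :=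
  Matrix.of fun i j => w i j / ∑ k, w i k

variable [Field R]

lemma treeMeasure_vecMul_rowNormalize [DecidableEq ι] {w : Matrix ι ι R}
    (hw : ∀ i, ∑ k, w i k ≠ 0) : treeMeasure w ᵥ* rowNormalize w = treeMeasure w := by
  nth_rw 2 [← rootedTreeSum_vecMul]
  ext j
  refine Finset.sum_congr rfl fun i _ => ?_
  change (∑ k, w i k) * rootedTreeSum w i * (w i j / ∑ k, w i k) = rootedTreeSum w i * w i j
  field_simp [hw i]

variable [LinearOrder R] [IsStrictOrderedRing R] {w : Matrix ι ι R}

lemma rowNormalize_apply_pos_iff {i : ι} (hi : 0 < ∑ k, w i k) {j : ι} :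
    0 < rowNormalize w i j ↔ 0 < w i j :=
  div_pos_iff_of_pos_right hi

lemma rowNormalize_isIrreducible (hw : w.IsIrreducible) : (rowNormalize w).IsIrreducible :=
  isIrreducible_of_apply_pos_iff hw
    (fun i j => div_nonneg (hw.nonneg i j) (sum_row_pos_of_isIrreducible hw i).le)
    fun i _ => (rowNormalize_apply_pos_iff (sum_row_pos_of_isIrreducible hw i)).symm

variable [DecidableEq ι]

lemma rootedTreeSum_pos (hw : w.IsIrreducible) (r : ι) : 0 < rootedTreeSum w r := by
  obtain ⟨t, hroot, htree, hpos⟩ := exists_everyOrbitHits_of_isIrreducible hw r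
  exact Finset.sum_pos' (fun t _ => Finset.prod_nonneg fun i _ => hw.nonneg i (t i))
    ⟨t, by simp [hroot, htree], Finset.prod_pos fun i hi => hpos i (by simpa using hi)⟩

lemma treeMeasure_pos (hw : w.IsIrreducible) (r : ι) : 0 < treeMeasure w r :=
  mul_pos (sum_row_pos_of_isIrreducible hw r) (rootedTreeSum_pos hw r)

theorem eq_treeMeasure_div_sum_of_vecMul_eq (hw : w.IsIrreducible) {v : ι → R}
    (hv : ∑ i, v i = 1) (hvw : v ᵥ* rowNormalize w = v) (r : ι) :
    v r = treeMeasure w r / ∑ i, treeMeasure w i := by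
  obtain ⟨c, rfl⟩ := exists_eq_smul_of_vecMul_eq (rowNormalize_isIrreducible hw)
    (treeMeasure_pos hw)
    (treeMeasure_vecMul_rowNormalize fun i => (sum_row_pos_of_isIrreducible hw i).ne') hvw
  simp only [Pi.smul_apply, smul_eq_mul, ← Finset.mul_sum] at hv ⊢
  rw [eq_one_div_of_mul_eq_one_left hv, one_div_mul_eq_div]

end MarkovChainTree

section WeightedChain

variable {n : ℕ}

lemma isArb_rowNormalize_iff {w : Matrix (Fin n) (Fin n) ℝ} (hw : ∀ i, 0 < ∑ k, w i k)
    {r : Fin n} {t : Fin n → Fin n} : IsArb (rowNormalize w) r t ↔ IsArb w r t := by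
  simp only [IsArb, rowNormalize_apply_pos_iff (hw _)]

lemma sum_isArb_eq_rootedTreeSum {w : Matrix (Fin n) (Fin n) ℝ} (hw : ∀ i j, 0 ≤ w i j)
    (r : Fin n) :
    ∑ t : Fin n → Fin n with IsArb w r t, ∏ i with i ≠ r, w i (t i) = rootedTreeSum w r := by
  refine Finset.sum_subset (fun t ht => ?_) fun t ht hnot => ?_
  · obtain ⟨hroot, -, htree⟩ := (Finset.mem_filter.1 ht).2
    exact Finset.mem_filter.2 ⟨Finset.mem_univ t, hroot, htree⟩
  · obtain ⟨hroot, htree⟩ := (Finset.mem_filter.1 ht).2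
    obtain ⟨i, hir, hi⟩ : ∃ i ≠ r, w i (t i) ≤ 0 := by
      by_contra! hpos
      exact hnot (Finset.mem_filter.2 ⟨Finset.mem_univ t, hroot, hpos, htree⟩)
    exact Finset.prod_eq_zero (i := i) (by simpa using hir) (hi.antisymm (hw i (t i)))

/-- The edge weights `C_{ij} g(x_j)`, whose row normalization is `M_g(x)`. -/
def weightMatrix (C : Matrix (Fin n) (Fin n) ℝ) (g : ℝ → ℝ) (x : Fin n → ℝ) :
    Matrix (Fin n) (Fin n) ℝ :=
  Matrix.of fun i j => C i j * g (x j)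

variable {C : Matrix (Fin n) (Fin n) ℝ} {g : ℝ → ℝ} {x : Fin n → ℝ}

lemma Mg_eq_rowNormalize : Mg C g x = rowNormalize (weightMatrix C g x) := rfl

lemma weightMatrix_isIrreducible (hC0 : ∀ i j, 0 ≤ C i j) (hCirr : IsIrred C)
    (hg : ∀ j, 0 < g (x j)) : (weightMatrix C g x).IsIrreducible :=
  isIrreducible_of_apply_pos_iff ((isIrreducible_iff_exists_pow_pos hC0).2 hCirr)
    (fun i j => mul_nonneg (hC0 i j) (hg j).le) fun _ j => (mul_pos_iff_of_pos_right (hg j)).symm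

lemma hvec_eq_treeMeasure (hw : (weightMatrix C g x).IsIrreducible) :
    hvec C g x = treeMeasure (weightMatrix C g x) := by
  ext r
  rw [treeMeasure, ← sum_isArb_eq_rootedTreeSum hw.nonneg]
  simp only [hvec, Mg_eq_rowNormalize, isArb_rowNormalize_iff (sum_row_pos_of_isIrreducible hw)]
  rfl

theorem invariant_measure_matrix_tree_general (hC0 : ∀ i j, 0 ≤ C i j) (hCirr : IsIrred C)
    (hg : ∀ j, 0 < g (x j)) {v : Fin n → ℝ} (hv : ∑ i, v i = 1) (hvM : v ᵥ* Mg C g x = v)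
    (r : Fin n) : v r = hvec C g x r / ∑ i, hvec C g x i := by
  have hw := weightMatrix_isIrreducible hC0 hCirr hg
  rw [hvec_eq_treeMeasure hw]
  exact eq_treeMeasure_div_sum_of_vecMul_eq hw hv hvM r

end WeightedChain

theorem invariant_measure_matrix_tree
    (n : ℕ) (C : Matrix (Fin n) (Fin n) ℝ)
    (hC0 : ∀ i j, 0 ≤ C i j) (hCirr : IsIrred C)
    (g g' : ℝ → ℝ) (hg : IsAdmissible g g')
    (u : (Fin n → ℝ) → (Fin n → ℝ))
    (hu : ∀ x ∈ stdSimplex ℝ (Fin n), u x ∈ stdSimplex ℝ (Fin n) ∧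
      Matrix.vecMul (u x) (Mg C g x) = u x ∧
      ∀ v ∈ stdSimplex ℝ (Fin n), Matrix.vecMul v (Mg C g x) = v → v = u x) :
    ∀ x ∈ stdSimplex ℝ (Fin n), ∀ r : Fin n,
      u x r = hvec C g x r / ∑ i, hvec C g x i := by
  intro x hx
  obtain ⟨hux, hinv, -⟩ := hu x hx
  exact invariant_measure_matrix_tree_general hC0 hCirr
    (fun j => hg.2.2.2.1 _ (mem_Icc_of_mem_stdSimplex hx j)) hux.2 hinv
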